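/- arXiv:2409.11614 — 2 statements merged into one kernel-verified Lean document; each statement's English description precedes it below -/
import Mathlib

section
/- Every finite set of points in the Euclidean plane in general position, each colored red or blue, that contains at least one red point and at least one blue point, admits a plane bichromatic spanning tree (a spanning tree with straight-line edges in which every edge has one red and one blue endpoint and no two edges cross). -/
open scoped Classical

noncomputable section

/-- Points in the Euclidean plane. -/
abbrev Pt : Type := EuclideanSpace ℝ (Fin 2)

/-- `S` is in general position: no three (distinct) points of `S` are collinear. -/
def GenPos (S : Finset Pt) : Prop :=
  ∀ p ∈ S, ∀ q ∈ S, ∀ r ∈ S, p ≠ q → p ≠ r → q ≠ r →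
    ¬ Collinear ℝ ({p, q, r} : Set Pt)

/-- The closed segments `[a,b]` and `[c,d]` cross: they share a point that is
interior to both segments. -/
def SegCross (a b c d : Pt) : Prop :=
  ∃ p : Pt, p ∈ openSegment ℝ a b ∧ p ∈ openSegment ℝ c d

/-- Two unordered edges (over vertices lying in the plane) cross. -/
def EdgeCross {S : Finset Pt} (e₁ e₂ : Sym2 ↥S) : Prop :=
  ∃ a b c d : ↥S, e₁ = s(a, b) ∧ e₂ = s(c, d) ∧ SegCross ↑a ↑b ↑c ↑d

/-- A (straight-line drawn) graph is plane if no two of its edges cross. -/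
def PlaneGraph {S : Finset Pt} (G : SimpleGraph ↥S) : Prop :=
  ∀ e₁ ∈ G.edgeSet, ∀ e₂ ∈ G.edgeSet, e₁ ≠ e₂ → ¬ EdgeCross e₁ e₂

/-- Every edge has one red (`true`) and one blue (`false`) endpoint. -/
def Bichromatic {S : Finset Pt} (col : Pt → Bool) (G : SimpleGraph ↥S) : Prop :=
  ∀ u v : ↥S, G.Adj u v → col ↑u ≠ col ↑v

/-- The Euclidean length of an unordered edge. -/
def edgeLen {S : Finset Pt} : Sym2 ↥S → ℝ :=
  Sym2.lift ⟨fun a b => dist (a : Pt) (b : Pt), fun _ _ => dist_comm _ _⟩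

/-- The total Euclidean length of the edges of a graph drawn with straight-line edges. -/
def graphLen {S : Finset Pt} (G : SimpleGraph ↥S) : ℝ :=
  ∑ᶠ e ∈ G.edgeSet, edgeLen e

/-- A bichromatic spanning tree of `S`. -/
def IsBST {S : Finset Pt} (col : Pt → Bool) (G : SimpleGraph ↥S) : Prop :=
  G.IsTree ∧ Bichromatic col G

/-- A minimum bichromatic spanning tree of `S`. -/
def IsMinBST {S : Finset Pt} (col : Pt → Bool) (G : SimpleGraph ↥S) : Prop :=
  IsBST col G ∧ ∀ G' : SimpleGraph ↥S, IsBST col G' → graphLen G ≤ graphLen G'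

/-!
Fix a red point `r` and join every red point `p` to the blue points `b` that minimize
`dist p b - dist r b`. This graph is connected, since `r` is joined to every blue point and every
red point to at least one. It is plane: if edges `pb` and `qc` crossed, exchanging their blue
endpoints would strictly shorten the total length `dist p b + dist q c`, but minimality says that
no exchange can, the discounts `dist r b` and `dist r c` cancelling out. Any spanning tree of this
graph is as required.
-/

section Geometry

variable {R M : Type*} [Field R] [LinearOrder R] [IsStrictOrderedRing R] [AddCommGroup M]
  [Module R M]

theorem collinear_of_sameRay_vsub {X : Type*} [AddTorsor M X] {p b c : X}
    (h : SameRay R (b -ᵥ p) (c -ᵥ p)) : Collinear R {p, b, c} := by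
  rcases wbtw_total_of_sameRay_vsub_left h with hpbc | hpcb
  · exact hpbc.collinear
  · exact Set.pair_comm b c ▸ hpcb.collinear

theorem not_wbtw_of_mem_openSegment_of_not_sameRay {p b c x : M}
    (hray : ¬ SameRay R (b - p) (c - p)) (hx : x ∈ openSegment R p b) : ¬ Wbtw R p x c := by
  intro hxc
  have hxb : Wbtw R p x b := mem_segment_iff_wbtw.1 (openSegment_subset_segment R p b hx)
  refine hray (hxb.sameRay_vsub_left.symm.trans hxc.sameRay_vsub_left fun hxp => ?_)
  obtain rfl : x = p := sub_eq_zero.1 hxp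
  exact Or.inl (sub_eq_zero.2 (left_mem_openSegment_iff.1 hx).symm)

theorem disjoint_openSegment_of_not_sameRay {p b c : M} (hray : ¬ SameRay R (b - p) (c - p)) :
    Disjoint (openSegment R p b) (openSegment R p c) :=
  Set.disjoint_left.2 fun _ hxb hxc => not_wbtw_of_mem_openSegment_of_not_sameRay hray hxb
    (mem_segment_iff_wbtw.1 (openSegment_subset_segment R p c hxc))

theorem dist_add_dist_lt_of_mem_openSegment_of_mem_segment {E : Type*} [NormedAddCommGroup E]
    [NormedSpace ℝ E] [StrictConvexSpace ℝ E] {p b q c x : E}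
    (hray : ¬ SameRay ℝ (b - p) (c - p)) (hxb : x ∈ openSegment ℝ p b)
    (hxc : x ∈ segment ℝ q c) : dist p c + dist q b < dist p b + dist q c :=
  calc
    dist p c + dist q b < (dist p x + dist x c) + (dist q x + dist x b) :=
      add_lt_add_of_lt_of_le
        (dist_lt_dist_add_dist_iff.2 (not_wbtw_of_mem_openSegment_of_not_sameRay hray hxb))
        (dist_triangle q x b)
    _ = (dist p x + dist x b) + (dist q x + dist x c) := by ring
    _ = dist p b + dist q c := by
      rw [dist_add_dist_of_mem_segment (openSegment_subset_segment ℝ p b hxb),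
        dist_add_dist_of_mem_segment hxc]

end Geometry

section Drawing

variable {V E : Type*} [AddCommGroup E] [Module ℝ E]

/-- The relative interior of the straight-line edge `e`, when vertices are placed by `P`. A
straight-line drawing of `G` is plane when `G.edgeSet.PairwiseDisjoint (openEdge P)`. -/
def openEdge (P : V → E) (e : Sym2 V) : Set E :=
  e.lift ⟨fun u v => openSegment ℝ (P u) (P v), fun u v => openSegment_symm ℝ (P u) (P v)⟩

/-- As seen from any vertex, distinct vertices of the opposite color lie in distinct directions.
This is how general position enters the exclusion of crossings. As `0` is on the same ray as every
vector, a vertex seeing at least two others must not coincide with any of them. -/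
def BichromaticRaysDistinct (P : V → E) (col : V → Bool) : Prop :=
  ∀ p b c, col b ≠ col p → col c ≠ col p → b ≠ c → ¬ SameRay ℝ (P b - P p) (P c - P p)

theorem GenPos.bichromaticRaysDistinct {S : Finset Pt} (hgp : GenPos S) (col : Pt → Bool) :
    BichromaticRaysDistinct (Subtype.val : ↥S → Pt) fun v => col v := by
  intro p b c hbp hcp hbc hray
  refine hgp p p.2 b b.2 c c.2 ?_ ?_ (Subtype.coe_ne_coe.2 hbc) (collinear_of_sameRay_vsub hray)
  · exact fun h => hbp (congrArg col h.symm)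
  · exact fun h => hcp (congrArg col h.symm)

theorem planeGraph_of_pairwiseDisjoint_openEdge {S : Finset Pt} {G : SimpleGraph ↥S}
    (hG : G.edgeSet.PairwiseDisjoint (openEdge Subtype.val)) : PlaneGraph G := by
  rintro e he f hf hne ⟨a, b, c, d, rfl, rfl, x, hxab, hxcd⟩
  exact Set.disjoint_left.1 (hG he hf hne) hxab hxcd

end Drawing

section NearestBlue

variable {V X : Type*} [PseudoMetricSpace X] {P : V → X} {col : V → Bool} {w : V → ℝ}
  {p q b c : V}

/-- The blue vertex `b` is nearest to the red vertex `p` when the distance to each blue vertex `c`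
is discounted by `w c`; that is, `P p` lies in the additively weighted Voronoi cell of `b`. Red is
`true` and blue is `false`. -/
structure IsNearestBlue (P : V → X) (col : V → Bool) (w : V → ℝ) (p b : V) : Prop where
  red : col p = true
  blue : col b = false
  dist_sub_le : ∀ c, col c = false → dist (P p) (P b) - w b ≤ dist (P p) (P c) - w c

namespace IsNearestBlue

theorem ne (h : IsNearestBlue P col w p b) : p ≠ b :=
  ne_of_apply_ne col (by simp [h.red, h.blue])

theorem dist_add_dist_le (hpb : IsNearestBlue P col w p b) (hqc : IsNearestBlue P col w q c) :
    dist (P p) (P b) + dist (P q) (P c) ≤ dist (P p) (P c) + dist (P q) (P b) := by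
  linarith [hpb.dist_sub_le c hqc.blue, hqc.dist_sub_le b hpb.blue]

theorem disjoint_openSegment {E : Type*} [NormedAddCommGroup E] [NormedSpace ℝ E]
    [StrictConvexSpace ℝ E] {P : V → E} (hP : BichromaticRaysDistinct P col)
    (hpb : IsNearestBlue P col w p b) (hqc : IsNearestBlue P col w q c)
    (hne : s(p, b) ≠ s(q, c)) :
    Disjoint (openSegment ℝ (P p) (P b)) (openSegment ℝ (P q) (P c)) := by
  rcases eq_or_ne b c with rfl | hbc
  · have hpq : p ≠ q := fun h => hne (h ▸ rfl)
    rw [openSegment_symm ℝ (P p), openSegment_symm ℝ (P q)]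
    exact disjoint_openSegment_of_not_sameRay
      (hP b p q (by simp [hpb.red, hpb.blue]) (by simp [hqc.red, hpb.blue]) hpq)
  · have hray : ¬ SameRay ℝ (P b - P p) (P c - P p) :=
      hP p b c (by simp [hpb.red, hpb.blue]) (by simp [hpb.red, hqc.blue]) hbc
    refine Set.disjoint_left.2 fun x hxb hxc => (hpb.dist_add_dist_le hqc).not_gt ?_
    exact dist_add_dist_lt_of_mem_openSegment_of_mem_segment hray hxb
      (openSegment_subset_segment ℝ _ _ hxc)

end IsNearestBlue

theorem exists_isNearestBlue (P : V → X) (w : V → ℝ)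
    (hfin : {b | col b = false}.Finite) (hblue : ∃ b, col b = false) (hp : col p = true) :
    ∃ b, IsNearestBlue P col w p b := by
  obtain ⟨b, hb, hmin⟩ :=
    Set.exists_min_image _ (fun c => dist (P p) (P c) - w c) hfin hblue
  exact ⟨b, hp, hb, hmin⟩

theorem isNearestBlue_dist (P : V → X) (hp : col p = true) (hb : col b = false) :
    IsNearestBlue P col (fun v => dist (P p) (P v)) p b :=
  ⟨hp, hb, fun _ _ => by simp only [sub_self, le_refl]⟩

/-- The graph joining each red vertex to its nearest blue vertices, for distances discounted by
`w`. -/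
def nearestBlueGraph (P : V → X) (col : V → Bool) (w : V → ℝ) : SimpleGraph V :=
  SimpleGraph.fromRel (IsNearestBlue P col w)

theorem IsNearestBlue.adj (h : IsNearestBlue P col w p b) :
    (nearestBlueGraph P col w).Adj p b :=
  ⟨h.ne, Or.inl h⟩

theorem color_ne_of_nearestBlueGraph_adj {u v : V} (h : (nearestBlueGraph P col w).Adj u v) :
    col u ≠ col v := by
  rcases h.2 with h | h <;> simp [h.red, h.blue]

theorem exists_isNearestBlue_of_mem_edgeSet {e : Sym2 V}
    (he : e ∈ (nearestBlueGraph P col w).edgeSet) :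
    ∃ p b, IsNearestBlue P col w p b ∧ s(p, b) = e := by
  induction e with
  | _ u v =>
    rcases (SimpleGraph.mem_edgeSet _).1 he |>.2 with h | h
    · exact ⟨u, v, h, rfl⟩
    · exact ⟨v, u, h, Sym2.eq_swap⟩

theorem pairwiseDisjoint_openEdge_nearestBlueGraph {E : Type*} [NormedAddCommGroup E]
    [NormedSpace ℝ E] [StrictConvexSpace ℝ E] {P : V → E} (hP : BichromaticRaysDistinct P col)
    (w : V → ℝ) :
    (nearestBlueGraph P col w).edgeSet.PairwiseDisjoint (openEdge P) := by
  intro e he f hf hne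
  obtain ⟨p, b, hpb, rfl⟩ := exists_isNearestBlue_of_mem_edgeSet he
  obtain ⟨q, c, hqc, rfl⟩ := exists_isNearestBlue_of_mem_edgeSet hf
  exact hpb.disjoint_openSegment hP hqc hne

theorem connected_nearestBlueGraph_dist (P : V → X) {r : V} (hr : col r = true)
    (hfin : {b | col b = false}.Finite) (hblue : ∃ b, col b = false) :
    (nearestBlueGraph P col fun v => dist (P r) (P v)).Connected := by
  refine (SimpleGraph.connected_iff_exists_forall_reachable _).2 ⟨r, fun p => ?_⟩
  cases hp : col p with
  | false => exact (isNearestBlue_dist P hr hp).adj.reachable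
  | true =>
    obtain ⟨b, hpb⟩ := exists_isNearestBlue P (fun v => dist (P r) (P v)) hfin hblue hp
    exact (isNearestBlue_dist P hr hpb.blue).adj.reachable.trans hpb.adj.symm.reachable

end NearestBlue

theorem exists_plane_bichromatic_spanning_tree_general {V E : Type*} [NormedAddCommGroup E]
    [NormedSpace ℝ E] [StrictConvexSpace ℝ E] (P : V → E) (col : V → Bool)
    (hP : BichromaticRaysDistinct P col) (hfin : {b | col b = false}.Finite)
    (hred : ∃ r, col r = true) (hblue : ∃ b, col b = false) :
    ∃ G : SimpleGraph V, G.IsTree ∧ (∀ u v, G.Adj u v → col u ≠ col v) ∧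
      G.edgeSet.PairwiseDisjoint (openEdge P) := by
  obtain ⟨r, hr⟩ := hred
  obtain ⟨T, hle, hT⟩ := (connected_nearestBlueGraph_dist P hr hfin hblue).exists_isTree_le
  exact ⟨T, hT, fun _ _ huv => color_ne_of_nearestBlueGraph_adj (hle huv),
    (pairwiseDisjoint_openEdge_nearestBlueGraph hP _).subset (SimpleGraph.edgeSet_mono hle)⟩

/-- Every finite bicolored point set in general position with at
least one red and at least one blue point admits a plane bichromatic spanning tree. -/
theorem exists_plane_bichromatic_spanning_tree
    (S : Finset Pt) (col : Pt → Bool) (hgp : GenPos S)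
    (hred : ∃ r ∈ S, col r = true) (hblue : ∃ b ∈ S, col b = false) :
    ∃ G : SimpleGraph ↥S, G.IsTree ∧ Bichromatic col G ∧ PlaneGraph G := by
  obtain ⟨G, hT, hcol, hG⟩ := exists_plane_bichromatic_spanning_tree_general Subtype.val _
    (hgp.bichromaticRaysDistinct col) (Set.toFinite _) (by simpa using hred) (by simpa using hblue)
  exact ⟨G, hT, hcol, planeGraph_of_pairwiseDisjoint_openEdge hG⟩
end
end

section
/- For every integer n ≥ 2 there exists a bicolored point set S of n points in the plane in general position, containing at least one red and at least one blue point, such that some minimum bichromatic spanning tree of S has exactly ⌊n²/4⌋ − n + 1 crossings, where a crossing is an unordered pair of distinct edges of the tree that cross each other. -/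
open scoped Classical

noncomputable section

/-- The set of crossings of a graph: unordered pairs of distinct edges that cross. -/
def Crossings {S : Finset Pt} (G : SimpleGraph ↥S) : Set (Sym2 (Sym2 ↥S)) :=
  {p | ∃ e₁ e₂ : Sym2 ↥S, p = s(e₁, e₂) ∧ e₁ ∈ G.edgeSet ∧ e₂ ∈ G.edgeSet ∧
    e₁ ≠ e₂ ∧ EdgeCross e₁ e₂}

/-!
Put red points to the left and blue points to the right of the vertex of the parabola `y = x²`, all
close to the vertex. From any point, the nearest point of the other colour is then the one closest
to the vertex. A connected graph can charge an edge to each of its vertices but one, namely the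
first edge of a shortest path to the remaining vertex, so it is at least as long as the double star
whose centres are the red and the blue point closest to the vertex. Points of a parabola are in
convex position, so a red leaf edge and a blue leaf edge of the double star, whose endpoints
interleave, always cross. This gives `(r - 1) * (b - 1)` crossings for `r` red and `b` blue points,
which is `⌊n²/4⌋ - n + 1` when `n` is split as evenly as possible.
-/

section ConnectedGraph

variable {V : Type*} {G : SimpleGraph V}

lemma exists_adj_dist_lt_of_connected (hG : G.Connected) {v root : V} (hv : v ≠ root) :
    ∃ u, G.Adj v u ∧ G.dist u root < G.dist v root := by
  obtain ⟨walk, hwalk⟩ := hG.exists_walk_length_eq_dist v root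
  cases walk with
  | nil => exact absurd rfl hv
  | cons hadj tail =>
    refine ⟨_, hadj, (SimpleGraph.dist_le tail).trans_lt ?_⟩
    rw [← hwalk, SimpleGraph.Walk.length_cons]
    exact Nat.lt_succ_self _

lemma exists_parent_of_connected (hG : G.Connected) (root : V) :
    ∃ parent : V → V, (∀ v ≠ root, G.Adj v (parent v)) ∧
      Set.InjOn (fun v ↦ s(v, parent v)) {root}ᶜ := by
  choose! parent hadj hlt using fun v (hv : v ≠ root) ↦ exists_adj_dist_lt_of_connected hG hv
  refine ⟨parent, hadj, fun v hv w hw h ↦ ?_⟩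
  rcases Sym2.eq_iff.1 h with ⟨hvw, -⟩ | ⟨hv', hw'⟩
  · exact hvw
  · have hwv : G.dist w root < G.dist v root := hw' ▸ hlt v hv
    have hvw : G.dist v root < G.dist w root := hv' ▸ hlt w hw
    exact absurd hwv hvw.not_gt

lemma finsum_compl_singleton_le_finsum_edgeSet [Finite V] {M : Type*} [AddCommMonoid M]
    [PartialOrder M] [IsOrderedAddMonoid M] (hG : G.Connected) (root : V) {weight : V → M}
    {len : Sym2 V → M} (hlen : ∀ e ∈ G.edgeSet, 0 ≤ len e)
    (hweight : ∀ u v, G.Adj u v → u ≠ root → weight u ≤ len s(u, v)) :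
    ∑ᶠ v ∈ ({root}ᶜ : Set V), weight v ≤ ∑ᶠ e ∈ G.edgeSet, len e := by
  obtain ⟨parent, hadj, hinj⟩ := exists_parent_of_connected hG root
  have hedge : (fun v ↦ s(v, parent v)) '' {root}ᶜ ⊆ G.edgeSet := by
    rintro _ ⟨v, hv, rfl⟩
    exact hadj v hv
  calc ∑ᶠ v ∈ ({root}ᶜ : Set V), weight v
      ≤ ∑ᶠ v ∈ ({root}ᶜ : Set V), len s(v, parent v) := by
        simp only [finsum_mem_eq_finite_toFinset_sum _ (Set.toFinite _)]
        refine Finset.sum_le_sum fun v hv ↦ ?_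
        have hv : v ≠ root := by simpa using hv
        exact hweight _ _ (hadj v hv) hv
    _ = ∑ᶠ e ∈ (fun v ↦ s(v, parent v)) '' {root}ᶜ, len e := (finsum_mem_image hinj).symm
    _ ≤ ∑ᶠ e ∈ G.edgeSet, len e := by
        simp only [finsum_mem_eq_finite_toFinset_sum _ (Set.toFinite _)]
        exact Finset.sum_le_sum_of_subset_of_nonneg (Set.Finite.toFinset_mono hedge)
          fun e he _ ↦ hlen e (by simpa using he)

end ConnectedGraph

section DoubleStar

/-- The double star on a `Bool`-coloured vertex set: every vertex is joined to the centre of the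
opposite colour, where `centre i` stands for the centre of colour `i`. -/
def doubleStar {V : Type*} (col : V → Bool) (centre : Bool → V) : SimpleGraph V where
  Adj u v := col u ≠ col v ∧ (u = centre (col u) ∨ v = centre (col v))
  symm := ⟨fun _ _ h ↦ ⟨h.1.symm, h.2.symm⟩⟩
  loopless := ⟨fun _ h ↦ h.1 rfl⟩

/-- The edge of the double star from `v` to the centre of the other colour. The spokes of the two
centres are the same edge. -/
def spoke {V : Type*} (col : V → Bool) (centre : Bool → V) (v : V) : Sym2 V :=
  s(v, centre (!col v))

/-- The leaves of colour `i` of the double star: the vertices of colour `i` besides the centre. -/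
def leaves {V : Type*} (col : V → Bool) (centre : Bool → V) (i : Bool) : Set V :=
  {v | col v = i ∧ v ≠ centre i}

variable {V : Type*} {col : V → Bool} {centre : Bool → V}

lemma spoke_mem_edgeSet_doubleStar (hcentre : ∀ i, col (centre i) = i) (v : V) :
    spoke col centre v ∈ (doubleStar col centre).edgeSet := by
  simp [spoke, doubleStar, hcentre]

lemma spoke_eq_spoke (hcentre : ∀ i, col (centre i) = i) {v w : V}
    (h : spoke col centre v = spoke col centre w) :
    v = w ∨ col v ≠ col w ∧ v = centre (col v) ∧ w = centre (col w) := by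
  rcases Sym2.eq_iff.1 h with ⟨hvw, -⟩ | ⟨hv, hw⟩
  · exact .inl hvw
  · have hcol : col v = !col w := by rw [hv, hcentre]
    refine .inr ⟨Bool.eq_not.1 hcol, by rwa [hcol], ?_⟩
    rw [← hw, hcentre, hcol, Bool.not_not]

lemma injOn_spoke_compl_centre (hcentre : ∀ i, col (centre i) = i) (i : Bool) :
    Set.InjOn (spoke col centre) {centre i}ᶜ := by
  intro v hv w hw h
  rcases spoke_eq_spoke hcentre h with hvw | ⟨hcol, hv', hw'⟩
  · exact hvw
  · rcases Bool.eq_or_eq_not (col v) i with hi | hi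
    · exact absurd (hi ▸ hv') hv
    · have hi : col w = i := by rw [← Bool.not_eq.2 hcol, hi, Bool.not_not]
      exact absurd (hi ▸ hw') hw

lemma eq_of_spoke_eq_of_mem_leaves (hcentre : ∀ i, col (centre i) = i) {i : Bool} {v w : V}
    (hv : v ∈ leaves col centre i) (h : spoke col centre v = spoke col centre w) : v = w :=
  (spoke_eq_spoke hcentre h).resolve_right fun h ↦ hv.2 (hv.1 ▸ h.2.1)

lemma spoke_centre_not (hcentre : ∀ i, col (centre i) = i) (i : Bool) :
    spoke col centre (centre !i) = spoke col centre (centre i) := by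
  simp only [spoke, hcentre, Bool.not_not, Sym2.eq_swap]

lemma spoke_eq_of_eq_centre {u v : V} (hcol : col u ≠ col v) (hv : v = centre (col v)) :
    spoke col centre u = s(u, v) := by
  rw [spoke, Bool.not_eq.2 hcol, ← hv]

lemma exists_spoke_eq_of_mem_edgeSet {e : Sym2 V} (he : e ∈ (doubleStar col centre).edgeSet) :
    ∃ v, spoke col centre v = e := by
  induction e with
  | _ u v =>
    obtain ⟨hcol, hu | hv⟩ := he
    · exact ⟨v, by rw [spoke_eq_of_eq_centre hcol.symm hu, Sym2.eq_swap]⟩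
    · exact ⟨u, spoke_eq_of_eq_centre hcol hv⟩

lemma edgeSet_doubleStar (hcentre : ∀ i, col (centre i) = i) (i : Bool) :
    (doubleStar col centre).edgeSet = spoke col centre '' {centre i}ᶜ := by
  refine Set.Subset.antisymm (fun e he ↦ ?_) ?_
  · obtain ⟨v, rfl⟩ := exists_spoke_eq_of_mem_edgeSet he
    by_cases hv : v = centre i
    · have hne : (centre !i) ≠ centre i := fun h ↦ by simpa [hcentre] using congrArg col h
      exact ⟨centre !i, hne, by rw [hv, spoke_centre_not hcentre]⟩
    · exact ⟨v, hv, rfl⟩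
  · rintro _ ⟨v, -, rfl⟩
    exact spoke_mem_edgeSet_doubleStar hcentre v

lemma connected_doubleStar (hcentre : ∀ i, col (centre i) = i) :
    (doubleStar col centre).Connected := by
  have hspoke (v : V) : (doubleStar col centre).Reachable v (centre !col v) :=
    SimpleGraph.Adj.reachable (spoke_mem_edgeSet_doubleStar hcentre v)
  have hcentres : (doubleStar col centre).Reachable (centre false) (centre true) := by
    simpa [hcentre] using hspoke (centre false)
  have hroot (v : V) : (doubleStar col centre).Reachable v (centre true) := by
    have hv := hspoke v
    cases hcol : col v with
    | false => rwa [hcol] at hv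
    | true => exact (hcol ▸ hv).trans hcentres
  have : Nonempty V := ⟨centre true⟩
  exact ⟨fun u v ↦ (hroot u).trans (hroot v).symm⟩

lemma isTree_doubleStar [Finite V] (hcentre : ∀ i, col (centre i) = i) :
    (doubleStar col centre).IsTree := by
  refine SimpleGraph.isTree_iff_connected_and_card.2 ⟨connected_doubleStar hcentre, ?_⟩
  rw [Nat.card_coe_set_eq, edgeSet_doubleStar hcentre true,
    (injOn_spoke_compl_centre hcentre true).ncard_image, add_comm,
    ← Set.ncard_singleton (centre true), Set.ncard_add_ncard_compl]

lemma injOn_spoke_pair (hcentre : ∀ i, col (centre i) = i) :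
    Set.InjOn (fun z : V × V ↦ s(spoke col centre z.1, spoke col centre z.2))
      (leaves col centre true ×ˢ leaves col centre false) := by
  rintro ⟨v, w⟩ ⟨hv, hw⟩ ⟨v', w'⟩ ⟨-, hw'⟩ h
  rcases Sym2.eq_iff.1 h with ⟨hvv', hww'⟩ | ⟨hvw', -⟩
  · exact Prod.ext (eq_of_spoke_eq_of_mem_leaves hcentre hv hvv')
      (eq_of_spoke_eq_of_mem_leaves hcentre hw hww')
  · have hcol := congrArg col (eq_of_spoke_eq_of_mem_leaves hcentre hv hvw')
    simp [hv.1, hw'.1] at hcol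

lemma ncard_leaves (hcentre : ∀ i, col (centre i) = i) (i : Bool) :
    (leaves col centre i).ncard = {v | col v = i}.ncard - 1 :=
  Set.ncard_sdiff_singleton_of_mem (s := {v | col v = i}) (hcentre i)

end DoubleStar

section Crossings

lemma SegCross.symm {a b c d : Pt} (h : SegCross a b c d) : SegCross c d a b :=
  h.imp fun _ ↦ And.symm

lemma SegCross.swap_left {a b c d : Pt} (h : SegCross a b c d) : SegCross b a c d := by
  rwa [SegCross, openSegment_symm]

lemma SegCross.swap_right {a b c d : Pt} (h : SegCross a b c d) : SegCross a b d c :=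
  h.symm.swap_left.symm

lemma SegCross.collinear {a b c : Pt} (h : SegCross a b a c) :
    Collinear ℝ ({a, b, c} : Set Pt) := by
  obtain ⟨p, hb, hc⟩ := h
  rw [openSegment_eq_image'] at hb hc
  obtain ⟨s, ⟨hs, -⟩, rfl⟩ := hb
  obtain ⟨t, -, ht⟩ := hc
  have hbc : b = (s⁻¹ * t) • (c - a) +ᵥ a := by
    have hst : t • (c - a) = s • (b - a) := add_left_cancel ht
    rw [mul_smul, hst, inv_smul_smul₀ hs.ne', vadd_eq_add, sub_add_cancel]
  refine (collinear_iff_of_mem (p₀ := a) (by simp)).2 ⟨c - a, ?_⟩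
  rintro p (rfl | rfl | rfl)
  · exact ⟨0, by simp⟩
  · exact ⟨_, hbc⟩
  · exact ⟨1, by simp⟩

variable {S : Finset Pt}

lemma edgeCross_mk_iff {a b c d : ↥S} :
    EdgeCross s(a, b) s(c, d) ↔ SegCross (a : Pt) b c d := by
  refine ⟨?_, fun h ↦ ⟨a, b, c, d, rfl, rfl, h⟩⟩
  rintro ⟨a', b', c', d', hab, hcd, h⟩
  rcases Sym2.eq_iff.1 hab with ⟨rfl, rfl⟩ | ⟨rfl, rfl⟩ <;>
    rcases Sym2.eq_iff.1 hcd with ⟨rfl, rfl⟩ | ⟨rfl, rfl⟩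
  exacts [h, h.swap_right, h.swap_left, h.swap_left.swap_right]

lemma EdgeCross.symm {e f : Sym2 ↥S} (h : EdgeCross e f) : EdgeCross f e := by
  obtain ⟨a, b, c, d, he, hf, h⟩ := h
  exact ⟨c, d, a, b, hf, he, h.symm⟩

lemma GenPos.not_edgeCross_of_mem (hS : GenPos S) {G : SimpleGraph ↥S} {e f : Sym2 ↥S}
    (he : e ∈ G.edgeSet) (hf : f ∈ G.edgeSet) (hef : e ≠ f) {a : ↥S} (hae : a ∈ e)
    (haf : a ∈ f) : ¬ EdgeCross e f := by
  obtain ⟨b, rfl⟩ := Sym2.mem_iff_exists.1 hae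
  obtain ⟨c, rfl⟩ := Sym2.mem_iff_exists.1 haf
  have hbc : b ≠ c := fun h ↦ hef (by rw [h])
  rw [edgeCross_mk_iff]
  exact fun h ↦ hS a a.2 b b.2 c c.2 (Subtype.coe_ne_coe.2 (G.ne_of_adj he))
    (Subtype.coe_ne_coe.2 (G.ne_of_adj hf)) (Subtype.coe_ne_coe.2 hbc) h.collinear

variable {col : ↥S → Bool} {centre : Bool → ↥S}

lemma mem_leaves_of_edgeCross_spoke (hS : GenPos S) (hcentre : ∀ i, col (centre i) = i)
    {v w : ↥S} (hne : spoke col centre v ≠ spoke col centre w)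
    (h : EdgeCross (spoke col centre v) (spoke col centre w)) :
    col v ≠ col w ∧ v ∈ leaves col centre (col v) := by
  have hdisj (a : ↥S) (hv : a ∈ spoke col centre v) : a ∉ spoke col centre w := fun hw ↦
    hS.not_edgeCross_of_mem (spoke_mem_edgeSet_doubleStar hcentre v)
      (spoke_mem_edgeSet_doubleStar hcentre w) hne hv hw h
  have hcol : col v ≠ col w := fun hcol ↦
    hdisj (centre !col v) (Sym2.mem_mk_right _ _) (hcol ▸ Sym2.mem_mk_right _ _)
  refine ⟨hcol, rfl, fun hv ↦ hdisj v (Sym2.mem_mk_left _ _) ?_⟩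
  rw [spoke_eq_of_eq_centre hcol.symm hv]
  exact Sym2.mem_mk_right _ _

lemma crossings_doubleStar (hS : GenPos S) (hcentre : ∀ i, col (centre i) = i)
    (hcross : ∀ v ∈ leaves col centre true, ∀ w ∈ leaves col centre false,
      EdgeCross (spoke col centre v) (spoke col centre w)) :
    Crossings (doubleStar col centre) =
      (fun z : ↥S × ↥S ↦ s(spoke col centre z.1, spoke col centre z.2)) ''
        (leaves col centre true ×ˢ leaves col centre false) := by
  refine Set.Subset.antisymm ?_ ?_
  · rintro _ ⟨e, f, rfl, he, hf, hef, h⟩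
    obtain ⟨v, rfl⟩ := exists_spoke_eq_of_mem_edgeSet he
    obtain ⟨w, rfl⟩ := exists_spoke_eq_of_mem_edgeSet hf
    obtain ⟨hcol, hv⟩ := mem_leaves_of_edgeCross_spoke hS hcentre hef h
    obtain ⟨-, hw⟩ := mem_leaves_of_edgeCross_spoke hS hcentre hef.symm h.symm
    cases hcolv : col v with
    | true =>
      have hcolw : col w = false := by simpa [hcolv] using hcol
      exact ⟨(v, w), ⟨hcolv ▸ hv, hcolw ▸ hw⟩, rfl⟩
    | false =>
      have hcolw : col w = true := by simpa [hcolv] using hcol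
      exact ⟨(w, v), ⟨hcolw ▸ hw, hcolv ▸ hv⟩, Sym2.eq_swap⟩
  · rintro _ ⟨⟨v, w⟩, ⟨hv, hw⟩, rfl⟩
    refine ⟨_, _, rfl, spoke_mem_edgeSet_doubleStar hcentre v,
      spoke_mem_edgeSet_doubleStar hcentre w, fun h ↦ ?_, hcross v hv w hw⟩
    have hvw := congrArg col (eq_of_spoke_eq_of_mem_leaves hcentre hv h)
    simp [hv.1, hw.1] at hvw

lemma card_crossings_doubleStar (hS : GenPos S) (hcentre : ∀ i, col (centre i) = i)
    (hcross : ∀ v ∈ leaves col centre true, ∀ w ∈ leaves col centre false,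
      EdgeCross (spoke col centre v) (spoke col centre w)) :
    Nat.card (Crossings (doubleStar col centre)) =
      (leaves col centre true).ncard * (leaves col centre false).ncard := by
  rw [Nat.card_coe_set_eq, crossings_doubleStar hS hcentre hcross,
    (injOn_spoke_pair hcentre).ncard_image, Set.ncard_prod]

end Crossings

section MinBST

variable {S : Finset Pt}

lemma graphLen_doubleStar {col : ↥S → Bool} {centre : Bool → ↥S}
    (hcentre : ∀ i, col (centre i) = i) :
    graphLen (doubleStar col centre) =
      ∑ᶠ v ∈ ({centre true}ᶜ : Set ↥S), dist (v : Pt) (centre !col v) := by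
  rw [graphLen, edgeSet_doubleStar hcentre true,
    finsum_mem_image (injOn_spoke_compl_centre hcentre true)]
  rfl

lemma edgeLen_nonneg (e : Sym2 ↥S) : 0 ≤ edgeLen e := by
  induction e with
  | _ u v => exact dist_nonneg (x := (u : Pt)) (y := v)

lemma isMinBST_doubleStar {col : Pt → Bool} {centre : Bool → ↥S}
    (hcentre : ∀ i, col (centre i) = i)
    (hnearest : ∀ u v : ↥S, col u ≠ col v → dist (u : Pt) (centre (col v)) ≤ dist (u : Pt) v) :
    IsMinBST col (doubleStar (fun v : ↥S ↦ col v) centre) := by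
  refine ⟨⟨isTree_doubleStar hcentre, fun _ _ h ↦ h.1⟩, fun G ⟨hG, hGcol⟩ ↦ ?_⟩
  rw [graphLen_doubleStar (col := fun v : ↥S ↦ col v) hcentre]
  refine finsum_compl_singleton_le_finsum_edgeSet hG.connected _ (fun e _ ↦ edgeLen_nonneg e)
    fun u v huv _ ↦ ?_
  rw [Bool.not_eq.2 (hGcol u v huv)]
  exact hnearest u v (hGcol u v huv)

end MinBST

section Parabola

/-- The parabola `y = x²`. -/
def parabola : Set Pt := {p | p 1 = p 0 ^ 2}

lemma injOn_abscissa_parabola : Set.InjOn (fun p : Pt ↦ p 0) parabola := by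
  intro p hp q hq (h : p 0 = q 0)
  ext i
  fin_cases i
  · exact h
  · change p 1 = q 1
    rw [hp, hq, h]

lemma not_collinear_of_mem_parabola {p q r : Pt} (hp : p ∈ parabola) (hq : q ∈ parabola)
    (hr : r ∈ parabola) (hpq : p ≠ q) (hpr : p ≠ r) (hqr : q ≠ r) :
    ¬ Collinear ℝ ({p, q, r} : Set Pt) := by
  intro h
  obtain ⟨v, hv⟩ := (collinear_iff_of_mem (p₀ := p) (by simp)).1 h
  obtain ⟨s, hs⟩ := hv q (by simp)
  obtain ⟨t, ht⟩ := hv r (by simp)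
  have hqi (i : Fin 2) : q i = s * v i + p i := by rw [hs]; rfl
  have hri (i : Fin 2) : r i = t * v i + p i := by rw [ht]; rfl
  have hslopes : (q 0 - p 0) * (r 1 - p 1) = (r 0 - p 0) * (q 1 - p 1) := by
    rw [hqi, hqi, hri, hri]
    ring
  have hvandermonde : (q 0 - p 0) * (r 0 - p 0) * (r 0 - q 0) = 0 := by
    rw [hp, hq, hr] at hslopes
    linear_combination hslopes
  have hq0 : q 0 - p 0 ≠ 0 := sub_ne_zero.2 (injOn_abscissa_parabola.ne hq hp hpq.symm)
  have hr0 : r 0 - p 0 ≠ 0 := sub_ne_zero.2 (injOn_abscissa_parabola.ne hr hp hpr.symm)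
  have hrq : r 0 - q 0 ≠ 0 := sub_ne_zero.2 (injOn_abscissa_parabola.ne hr hq hqr.symm)
  exact mul_ne_zero (mul_ne_zero hq0 hr0) hrq hvandermonde

lemma genPos_of_subset_parabola {S : Finset Pt} (hS : ↑S ⊆ parabola) : GenPos S :=
  fun _ hp _ hq _ hr ↦ not_collinear_of_mem_parabola (hS hp) (hS hq) (hS hr)

lemma mem_openSegment_of_mem_parabola {a b p : Pt} (ha : a ∈ parabola) (hb : b ∈ parabola)
    (hap : a 0 < p 0) (hpb : p 0 < b 0) (hp : p 1 = (a 0 + b 0) * p 0 - a 0 * b 0) :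
    p ∈ openSegment ℝ a b := by
  have hab : 0 < b 0 - a 0 := by linarith
  refine ⟨(b 0 - p 0) / (b 0 - a 0), (p 0 - a 0) / (b 0 - a 0), div_pos (by linarith) hab,
    div_pos (by linarith) hab, by field_simp; ring, ?_⟩
  ext i
  fin_cases i <;>
    simp only [Fin.zero_eta, Fin.mk_one, PiLp.add_apply, PiLp.smul_apply, smul_eq_mul]
  · field_simp
    ring
  · rw [ha, hb, hp]
    field_simp
    ring

lemma segCross_of_interleaved {a b c d : Pt} (ha : a ∈ parabola) (hb : b ∈ parabola)
    (hc : c ∈ parabola) (hd : d ∈ parabola) (hab : a 0 < b 0) (hbc : b 0 < c 0)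
    (hcd : c 0 < d 0) : SegCross a c b d := by
  have hslope : 0 < b 0 + d 0 - a 0 - c 0 := by linarith
  -- the abscissa at which the chords `y = (a + c) x - a c` and `y = (b + d) x - b d` meet
  obtain ⟨x, hx⟩ : ∃ x, x * (b 0 + d 0 - a 0 - c 0) = b 0 * d 0 - a 0 * c 0 :=
    ⟨_, div_mul_cancel₀ _ hslope.ne'⟩
  have hbx : b 0 < x := by
    refine lt_of_mul_lt_mul_right ?_ hslope.le
    nlinarith [mul_pos (sub_pos.2 hab) (sub_pos.2 hbc)]
  have hxc : x < c 0 := by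
    refine lt_of_mul_lt_mul_right ?_ hslope.le
    nlinarith [mul_pos (sub_pos.2 hbc) (sub_pos.2 hcd)]
  refine ⟨!₂[x, (a 0 + c 0) * x - a 0 * c 0],
    mem_openSegment_of_mem_parabola ha hc (hab.trans hbx) hxc rfl,
    mem_openSegment_of_mem_parabola hb hd hbx (hxc.trans hcd) ?_⟩
  change (a 0 + c 0) * x - a 0 * c 0 = (b 0 + d 0) * x - b 0 * d 0
  linear_combination -hx

lemma dist_le_dist_of_mem_parabola {p q r : Pt} (hp : p ∈ parabola) (hq : q ∈ parabola)
    (hr : r ∈ parabola) (hp_le : 2 * p 0 ^ 2 ≤ 1) (hqr : q 0 ^ 2 ≤ r 0 ^ 2)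
    (hpqr : p 0 * r 0 ≤ p 0 * q 0) : dist p q ≤ dist p r := by
  rw [EuclideanSpace.dist_eq, EuclideanSpace.dist_eq]
  refine Real.sqrt_le_sqrt ?_
  simp only [Fin.sum_univ_two, Real.dist_eq, sq_abs]
  rw [hp, hq, hr]
  have hfactor : 0 ≤ (r 0 ^ 2 - q 0 ^ 2) * (1 - 2 * p 0 ^ 2 + q 0 ^ 2 + r 0 ^ 2) :=
    mul_nonneg (sub_nonneg.2 hqr) (by nlinarith [sq_nonneg (q 0), sq_nonneg (r 0)])
  linarith

end Parabola

section TwoSidedArc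

/-- The arc of the parabola over `|x| ≤ 1 / √2`, without the vertex. Up to this abscissa, the
distance from a point of the arc to the points on the other side of the axis increases with the
distance of the latter to the axis. -/
def twoSidedArc : Set Pt := {p | p ∈ parabola ∧ p 0 ≠ 0 ∧ 2 * p 0 ^ 2 ≤ 1}

/-- The colouring by sides of the axis of the parabola: red (`true`) on the left, blue (`false`)
on the right. -/
def sideColor (p : Pt) : Bool := decide (p 0 < 0)

lemma sideColor_eq_true_iff {p : Pt} : sideColor p = true ↔ p 0 < 0 := decide_eq_true_iff

lemma sideColor_eq_false_iff {p : Pt} (hp : p ∈ twoSidedArc) :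
    sideColor p = false ↔ 0 < p 0 := by
  rw [sideColor, decide_eq_false_iff_not, not_lt, hp.2.1.symm.le_iff_lt]

lemma infinite_setOf_sideColor_eq (i : Bool) : {p ∈ twoSidedArc | sideColor p = i}.Infinite := by
  let point (x : ℝ) : Pt := !₂[bif i then -x else x, x ^ 2]
  have hinj : Set.InjOn point (Set.Ioo 0 (1 / 2)) := fun x hx y hy h ↦
    (pow_left_inj₀ hx.1.le hy.1.le two_ne_zero).1 (congrArg (fun p : Pt ↦ p 1) h)
  refine Set.infinite_of_injOn_mapsTo hinj (fun x ⟨hx, hx_lt⟩ ↦ ?_) (Set.Ioo_infinite (by norm_num))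
  have hsq : point x 0 ^ 2 = x ^ 2 := by cases i <;> simp [point]
  refine ⟨⟨hsq.symm, fun h ↦ ?_, by rw [hsq]; nlinarith⟩, ?_⟩
  · rw [h, zero_pow two_ne_zero] at hsq
    exact (pow_pos hx 2).ne hsq
  · cases i <;> simp [sideColor, point, hx, hx.not_gt]

lemma exists_finset_card_sideColor_eq (k : Bool → ℕ) :
    ∃ S : Finset Pt, ↑S ⊆ twoSidedArc ∧ ∀ i, Finset.card {p ∈ S | sideColor p = i} = k i := by
  choose P hP hcard using fun i ↦ (infinite_setOf_sideColor_eq i).exists_subset_card_eq (k i)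
  refine ⟨Finset.univ.biUnion P, fun p hp ↦ ?_, fun i ↦ ?_⟩
  · obtain ⟨i, -, hi⟩ := Finset.mem_biUnion.1 hp
    exact (hP i hi).1
  · rw [← hcard i]
    congr 1
    ext p
    simp only [Finset.mem_filter, Finset.mem_biUnion, Finset.mem_univ, true_and]
    refine ⟨?_, fun hp ↦ ⟨⟨i, hp⟩, (hP i hp).2⟩⟩
    rintro ⟨⟨j, hj⟩, rfl⟩
    rwa [(hP j hj).2]

/-- The centres of the double star that is shortest on the two-sided arc: the points closest to the
axis on the left (`centre true`) and on the right (`centre false`). -/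
structure IsInnermost {S : Finset Pt} (centre : Bool → ↥S) : Prop where
  centre_true_neg : (centre true : Pt) 0 < 0
  le_centre_true (v : ↥S) (hv : (v : Pt) 0 < 0) : (v : Pt) 0 ≤ (centre true : Pt) 0
  centre_false_pos : 0 < (centre false : Pt) 0
  centre_false_le (v : ↥S) (hv : 0 < (v : Pt) 0) : (centre false : Pt) 0 ≤ (v : Pt) 0

variable {S : Finset Pt}

lemma exists_isInnermost (hleft : ∃ v : ↥S, (v : Pt) 0 < 0) (hright : ∃ v : ↥S, 0 < (v : Pt) 0) :
    ∃ centre : Bool → ↥S, IsInnermost centre := by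
  obtain ⟨r, hr, hr_max⟩ := Set.exists_max_image {v : ↥S | (v : Pt) 0 < 0} (fun v ↦ (v : Pt) 0)
    (Set.toFinite _) hleft
  obtain ⟨b, hb, hb_min⟩ := Set.exists_min_image {v : ↥S | 0 < (v : Pt) 0} (fun v ↦ (v : Pt) 0)
    (Set.toFinite _) hright
  exact ⟨fun i ↦ bif i then r else b, hr, hr_max, hb, hb_min⟩

variable {centre : Bool → ↥S}

lemma IsInnermost.sideColor_centre (hcentre : IsInnermost centre) (i : Bool) :
    sideColor (centre i) = i := by
  cases i with
  | true => exact sideColor_eq_true_iff.2 hcentre.centre_true_neg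
  | false => exact decide_eq_false hcentre.centre_false_pos.not_gt

lemma IsInnermost.isMinBST (hcentre : IsInnermost centre) (hS : ↑S ⊆ twoSidedArc) :
    IsMinBST sideColor (doubleStar (fun v : ↥S ↦ sideColor v) centre) := by
  refine isMinBST_doubleStar hcentre.sideColor_centre fun u v huv ↦ ?_
  obtain ⟨hu, -, hu_le⟩ := hS u.2
  have hv := (hS v.2).1
  have hc := (hS (centre (sideColor v)).2).1
  have hu_color := Bool.not_eq.2 huv.symm
  cases hv_color : sideColor v with
  | true =>
    rw [hv_color] at hu_color hc
    have hu_pos := (sideColor_eq_false_iff (hS u.2)).1 hu_color.symm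
    have hv_le := hcentre.le_centre_true v (sideColor_eq_true_iff.1 hv_color)
    exact dist_le_dist_of_mem_parabola hu hc hv hu_le
      (sq_le_sq.2 (abs_le_abs_of_nonpos hcentre.centre_true_neg.le hv_le))
      (mul_le_mul_of_nonneg_left hv_le hu_pos.le)
  | false =>
    rw [hv_color] at hu_color hc
    have hu_neg := sideColor_eq_true_iff.1 hu_color.symm
    have hle_v := hcentre.centre_false_le v ((sideColor_eq_false_iff (hS v.2)).1 hv_color)
    exact dist_le_dist_of_mem_parabola hu hc hv hu_le
      (pow_le_pow_left₀ hcentre.centre_false_pos.le hle_v 2)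
      (mul_le_mul_of_nonpos_left hle_v hu_neg.le)

lemma IsInnermost.edgeCross_spoke (hcentre : IsInnermost centre) (hS : ↑S ⊆ twoSidedArc) {v w : ↥S}
    (hv : v ∈ leaves (fun v : ↥S ↦ sideColor v) centre true)
    (hw : w ∈ leaves (fun v : ↥S ↦ sideColor v) centre false) :
    EdgeCross (spoke (fun v : ↥S ↦ sideColor v) centre v)
      (spoke (fun v : ↥S ↦ sideColor v) centre w) := by
  obtain ⟨hv_red, hv_ne⟩ := hv
  obtain ⟨hw_blue, hw_ne⟩ := hw
  have harc (v : ↥S) : (v : Pt) ∈ parabola := (hS v.2).1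
  have hne {v w : ↥S} (h : v ≠ w) : (v : Pt) 0 ≠ (w : Pt) 0 :=
    injOn_abscissa_parabola.ne (harc v) (harc w) (Subtype.coe_ne_coe.2 h)
  have hleft : (v : Pt) 0 < (centre true : Pt) 0 :=
    (hcentre.le_centre_true v (sideColor_eq_true_iff.1 hv_red)).lt_of_ne (hne hv_ne)
  have hright : (centre false : Pt) 0 < (w : Pt) 0 :=
    (hcentre.centre_false_le w ((sideColor_eq_false_iff (hS w.2)).1 hw_blue)).lt_of_ne'
      (hne hw_ne)
  have hmiddle := hcentre.centre_true_neg.trans hcentre.centre_false_pos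
  simp only [spoke, hv_red, hw_blue, edgeCross_mk_iff, Bool.not_true, Bool.not_false]
  exact (segCross_of_interleaved (harc _) (harc _) (harc _) (harc _) hleft hmiddle
    hright).swap_right

lemma ncard_setOf_coe_eq_card_filter {α : Type*} (S : Finset α) (P : α → Prop)
    [DecidablePred P] : {v : ↥S | P v}.ncard = Finset.card {p ∈ S | P p} := by
  rw [← Set.ncard_image_of_injective _ Subtype.val_injective, ← Set.ncard_coe_finset]
  congr 1
  ext p
  simp [and_comm]

lemma exists_minBST_of_subset_twoSidedArc (hS : ↑S ⊆ twoSidedArc)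
    (hcolors : ∀ i, ∃ p ∈ S, sideColor p = i) :
    ∃ T : SimpleGraph ↥S, IsMinBST sideColor T ∧
      Nat.card (Crossings T) = (Finset.card {p ∈ S | sideColor p = true} - 1) *
        (Finset.card {p ∈ S | sideColor p = false} - 1) := by
  obtain ⟨p, hp, hp_red⟩ := hcolors true
  obtain ⟨q, hq, hq_blue⟩ := hcolors false
  obtain ⟨centre, hcentre⟩ := exists_isInnermost (S := S)
    ⟨⟨p, hp⟩, sideColor_eq_true_iff.1 hp_red⟩
    ⟨⟨q, hq⟩, (sideColor_eq_false_iff (hS hq)).1 hq_blue⟩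
  have hgen : GenPos S := genPos_of_subset_parabola fun p hp ↦ (hS hp).1
  refine ⟨_, hcentre.isMinBST hS, ?_⟩
  rw [card_crossings_doubleStar hgen hcentre.sideColor_centre
      fun v hv w hw ↦ hcentre.edgeCross_spoke hS hv hw,
    ncard_leaves (col := fun v : ↥S ↦ sideColor v) hcentre.sideColor_centre,
    ncard_leaves (col := fun v : ↥S ↦ sideColor v) hcentre.sideColor_centre,
    ncard_setOf_coe_eq_card_filter S (sideColor · = true),
    ncard_setOf_coe_eq_card_filter S (sideColor · = false)]

end TwoSidedArc

lemma sq_ediv_four (n : ℤ) : n ^ 2 / 4 = n / 2 * (n - n / 2) := by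
  obtain ⟨k, rfl | rfl⟩ := Int.even_or_odd' n
  · have hhalf : 2 * k / 2 = k := by omega
    rw [hhalf, show (2 * k) ^ 2 = k * (2 * k - k) * 4 by ring,
      Int.mul_ediv_cancel _ four_ne_zero]
  · have hhalf : (2 * k + 1) / 2 = k := by omega
    rw [hhalf, show (2 * k + 1) ^ 2 = 1 + k * (2 * k + 1 - k) * 4 by ring,
      Int.add_mul_ediv_right _ _ four_ne_zero]
    norm_num

lemma cast_half_pred_mul_half_pred {n : ℕ} (hn : 2 ≤ n) :
    (((n / 2 - 1) * (n - n / 2 - 1) : ℕ) : ℤ) = (n : ℤ) ^ 2 / 4 - n + 1 := by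
  have hfloor : 1 ≤ n / 2 := by omega
  have hceil : 1 ≤ n - n / 2 := by omega
  rw [sq_ediv_four]
  push_cast [Nat.cast_sub hfloor, Nat.cast_sub hceil, Nat.cast_sub (Nat.div_le_self n 2)]
  ring

/-- For every `n ≥ 2` there is a bicolored set of `n` points in
general position, with at least one red and one blue point, such that some minimum
bichromatic spanning tree of it has exactly `⌊n²/4⌋ − n + 1` crossings. -/
theorem exists_minBST_with_max_crossings (n : ℕ) (hn : 2 ≤ n) :
    ∃ (S : Finset Pt) (col : Pt → Bool) (T : SimpleGraph ↥S),
      S.card = n ∧ GenPos S ∧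
      (∃ r ∈ S, col r = true) ∧ (∃ b ∈ S, col b = false) ∧
      IsMinBST col T ∧
      (Nat.card (Crossings T) : ℤ) = (n : ℤ) ^ 2 / 4 - n + 1 := by
  obtain ⟨S, hS, hcard⟩ := exists_finset_card_sideColor_eq fun i ↦ bif i then n / 2 else n - n / 2
  have hcolors (i : Bool) : ∃ p ∈ S, sideColor p = i := by
    have hpos : 0 < Finset.card {p ∈ S | sideColor p = i} := by
      rw [hcard]
      cases i <;> simp only [cond_true, cond_false] <;> omega
    obtain ⟨p, hp⟩ := Finset.card_pos.1 hpos
    exact ⟨p, Finset.mem_filter.1 hp⟩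
  obtain ⟨T, hT, hcross⟩ := exists_minBST_of_subset_twoSidedArc hS hcolors
  refine ⟨S, sideColor, T, ?_, genPos_of_subset_parabola fun p hp ↦ (hS hp).1, hcolors true,
    hcolors false, hT, ?_⟩
  · rw [Finset.card_eq_sum_card_fiberwise (f := sideColor) (t := Finset.univ)
      fun p _ ↦ Finset.mem_coe.2 (Finset.mem_univ _), Fintype.sum_bool, hcard, hcard]
    exact Nat.add_sub_of_le (Nat.div_le_self n 2)
  · rw [hcross, hcard, hcard]
    exact cast_half_pred_mul_half_pred hn
end
end
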